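/- For every price bound λ̄ > 0, the simultaneous-move Stackelberg game between the MBS and the FUs with continuous strategies has a pure-strategy equilibrium with finite prices: there exist λ* ∈ [0, λ̄]^K and p* ∈ ∏_k [0, p_k^max] such that (i) Σ_k λ*_k·h_{k,0}·p*_k ≥ Σ_k λ_k·h_{k,0}·p*_k for every λ ∈ [0, λ̄]^K, and (ii) for every k and every p_k ∈ [0, p_k^max], u_k(λ*; p*_k, p*_{-k}) ≥ u_k(λ*; p_k, p*_{-k}). (This is the existence part of Theorem 3, with the MBS price restricted to a compact box.) -/

import Mathlib

open Real Finset

/-- SINR of FU `k`. -/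
noncomputable def sinr {K : ℕ} (hff : Fin K → Fin K → ℝ) (h0f N : Fin K → ℝ)
    (p0 : ℝ) (k : Fin K) (p : Fin K → ℝ) : ℝ :=
  hff k k * p k / (N k + h0f k * p0 + ∑ j ∈ Finset.univ.erase k, hff j k * p j)

/-- Net payoff of FU `k` for prices `lam`. -/
noncomputable def payoff {K : ℕ} (W pa p0 : ℝ) (hff : Fin K → Fin K → ℝ)
    (h0f hf0 N : Fin K → ℝ) (lam : Fin K → ℝ) (k : Fin K) (p : Fin K → ℝ) : ℝ :=
  W * Real.log (1 + sinr hff h0f N p0 k p) / (p k + pa) - lam k * hf0 k * p k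

/-- MBS revenue `u_0(λ, p) = Σ_k λ_k h_{k,0} p_k`. -/
noncomputable def revenue {K : ℕ} (hf0 : Fin K → ℝ) (lam p : Fin K → ℝ) : ℝ :=
  ∑ k, lam k * hf0 k * p k

section Brouwer
open MeasureTheory

variable {E : Type*} [NormedAddCommGroup E] [InnerProductSpace ℝ E] [FiniteDimensional ℝ E]

/-- `t ↦ det (1 + t A)` is a polynomial function of degree at most the dimension. -/
theorem det_one_add_smul_poly (A : E →L[ℝ] E) :
    ∃ P : Polynomial ℝ, P.natDegree ≤ Module.finrank ℝ E ∧
      ∀ t : ℝ, P.eval t = (ContinuousLinearMap.id ℝ E + t • A).det := by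
  classical
  let b := Module.finBasis ℝ E
  let M := LinearMap.toMatrix b b (A : E →ₗ[ℝ] E)
  refine ⟨((Polynomial.X : Polynomial ℝ) • M.map Polynomial.C +
    (1 : Matrix _ _ ℝ).map Polynomial.C).det, ?_, ?_⟩
  · simpa using Polynomial.natDegree_det_X_add_C_le M 1
  · intro t
    rw [ContinuousLinearMap.det, ← LinearMap.det_toMatrix b, ← Polynomial.coe_evalRingHom,
      RingHom.map_det]
    congr 1
    ext i j
    by_cases h : i = j
    · simp [M, Matrix.one_apply, h]
      ring
    · simp [M, Matrix.one_apply, h]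
      ring

theorem retract_aux_surj {g : E → E} {L : NNReal} (hg : LipschitzWith L g) {R : ℝ}
    (hout : ∀ x, R < ‖x‖ → g x = 0) {t : NNReal} (ht : t * L < 1) :
    Function.Injective (fun x => x + (t : ℝ) • g x) ∧
      (fun x => x + (t : ℝ) • g x) '' Metric.closedBall 0 R = Metric.closedBall 0 R := by
  have happ : ApproximatesLinearOn (fun x => x + (t : ℝ) • g x)
      ((ContinuousLinearEquiv.refl ℝ E : E ≃L[ℝ] E) : E →L[ℝ] E) Set.univ (t * L) := by
    intro x _ y _
    have h1 := hg.dist_le_mul x y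
    rw [dist_eq_norm, dist_eq_norm] at h1
    have h2 : x + (t : ℝ) • g x - (y + (t : ℝ) • g y) -
        ((ContinuousLinearEquiv.refl ℝ E : E ≃L[ℝ] E) : E →L[ℝ] E) (x - y)
        = (t : ℝ) • (g x - g y) := by
      simp [smul_sub]; abel
    rw [h2, norm_smul, NNReal.coe_mul, mul_assoc]
    simp only [Real.norm_eq_abs, NNReal.abs_eq]
    gcongr
  have hc : Subsingleton E ∨ (t * L) <
      ‖((ContinuousLinearEquiv.refl ℝ E : E ≃L[ℝ] E).symm : E →L[ℝ] E)‖₊⁻¹ := by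
    rcases subsingleton_or_nontrivial E with h | h
    · exact Or.inl h
    · right
      have : ‖((ContinuousLinearEquiv.refl ℝ E : E ≃L[ℝ] E).symm : E →L[ℝ] E)‖₊ = 1 := by
        have := ContinuousLinearMap.norm_id (𝕜 := ℝ) (E := E)
        ext
        simpa using this
      rw [this]; simpa using ht
  have hinj : Function.Injective (fun x => x + (t : ℝ) • g x) :=
    Set.injOn_univ.1 (happ.injOn hc)
  have hsurj := happ.surjective hc
  refine ⟨hinj, ?_⟩
  ext y
  simp only [Set.mem_image, Metric.mem_closedBall, dist_zero_right]
  constructor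
  · rintro ⟨x, hx, rfl⟩
    by_contra hcon
    push Not at hcon
    have h1 : x + (t : ℝ) • g x = x := by
      apply hinj
      simp [hout _ hcon]
    rw [h1] at hcon
    linarith
  · intro hy
    obtain ⟨x, rfl⟩ := hsurj y
    refine ⟨x, ?_, rfl⟩
    by_contra hcon
    push Not at hcon
    simp only [hout _ hcon, smul_zero, add_zero] at hy
    linarith

theorem lipschitz_indicator {G : E → E} {L : NNReal} {R : ℝ}
    (hG : LipschitzOnWith L G (Metric.closedBall 0 R)) (h0 : ∀ x, ‖x‖ = R → G x = 0) :
    LipschitzWith L (Set.indicator (Metric.closedBall 0 R) G) := by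
  have key : ∀ x y : E, ‖x‖ ≤ R → R < ‖y‖ → ‖G x‖ ≤ L * ‖x - y‖ := by
    intro x y hx hy
    have hcont : ContinuousOn (fun s : ℝ => ‖x + s • (y - x)‖) (Set.Icc 0 1) := by fun_prop
    have := intermediate_value_Icc (zero_le_one) hcont
    obtain ⟨s, hs, hs'⟩ := this (show R ∈ Set.Icc _ _ by simp [hx, hy.le])
    have h1 := hG.dist_le_mul x (by simpa using hx) (x + s • (y - x)) (by simpa using hs'.le)
    rw [h0 _ hs', dist_zero_right, dist_eq_norm] at h1
    refine h1.trans ?_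
    gcongr
    have : x - (x + s • (y - x)) = s • (x - y) := by
      rw [← neg_sub y x, smul_neg]; abel
    rw [this, norm_smul, Real.norm_eq_abs, abs_of_nonneg hs.1]
    exact mul_le_of_le_one_left (norm_nonneg _) hs.2
  refine LipschitzWith.of_dist_le_mul fun x y => ?_
  by_cases hx : ‖x‖ ≤ R <;> by_cases hy : ‖y‖ ≤ R
  · rw [Set.indicator_of_mem (by simpa using hx), Set.indicator_of_mem (by simpa using hy)]
    exact hG.dist_le_mul x (by simpa using hx) y (by simpa using hy)
  · rw [Set.indicator_of_mem (by simpa using hx), Set.indicator_of_notMem (by simpa using hy),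
      dist_zero_right, dist_eq_norm]
    exact key x y hx (not_le.1 hy)
  · rw [Set.indicator_of_mem (a := y) (by simpa using hy),
      Set.indicator_of_notMem (by simpa using hx), dist_zero_left, dist_comm, dist_eq_norm]
    exact key y x hy (not_le.1 hx)
  · rw [Set.indicator_of_notMem (by simpa using hx), Set.indicator_of_notMem (by simpa using hy)]
    simp; positivity

theorem det_fderiv_eq_zero {r : E → E} (hr : ContDiff ℝ 1 r) {R : ℝ} (hR : 0 < R)
    (hn : ∀ x, ‖r x‖ = R) (x : E) : (fderiv ℝ r x).det = 0 := by
  by_contra hdet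
  have hd : HasFDerivAt r (fderiv ℝ r x) x :=
    (hr.differentiable one_ne_zero x).hasFDerivAt
  have horth : ∀ v, inner ℝ (r x) (fderiv ℝ r x v) = 0 := by
    intro v
    have h1 := (hd.norm_sq)
    have h2 : (fun y => ‖r y‖ ^ 2) = fun _ => R ^ 2 := by
      funext y; rw [hn]
    rw [h2] at h1
    have h3 := h1.unique (hasFDerivAt_const _ _)
    have h4 := congrArg (fun A => A v) h3
    simpa using h4
  have hu : IsUnit (LinearMap.det (fderiv ℝ r x : E →ₗ[ℝ] E)) := isUnit_iff_ne_zero.2 hdet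
  let e := LinearEquiv.ofIsUnitDet (f := (fderiv ℝ r x : E →ₗ[ℝ] E)) (v := Module.finBasis ℝ E)
    (v' := Module.finBasis ℝ E) (by simpa [LinearMap.det_toMatrix] using hu)
  have h5 := horth (e.symm (r x))
  have h6 : fderiv ℝ r x (e.symm (r x)) = r x := e.apply_symm_apply (r x)
  rw [h6, real_inner_self_eq_norm_sq, hn] at h5
  exact hR.ne' (by simpa using h5)

theorem no_retract {r : E → E} (hr : ContDiff ℝ 1 r) {R : ℝ} (hR : 0 < R)
    (hn : ∀ x, ‖r x‖ = R) (hfix : ∀ x, ‖x‖ = R → r x = x) : False := by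
  letI : MeasurableSpace E := borel E
  haveI : BorelSpace E := ⟨rfl⟩
  let μ : Measure E := volume
  set B : Set E := Metric.closedBall 0 R with hB
  have hBc : IsCompact B := isCompact_closedBall 0 R
  let G : E → E := fun x => r x - x
  have hGc : ContDiff ℝ 1 G := hr.sub contDiff_id
  obtain ⟨L, hL⟩ := hGc.contDiffOn.exists_lipschitzOnWith one_ne_zero
    (convex_closedBall (0 : E) R) hBc
  have hg := lipschitz_indicator hL (fun x hx => by simp [G, hfix x hx])
  have hA : Continuous (fderiv ℝ G) := hGc.continuous_fderiv one_ne_zero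
  obtain ⟨C, hC⟩ := hBc.exists_bound_of_continuousOn hA.continuousOn
  -- determinants are positive for small `t`
  have hpos : ∀ᶠ A : E →L[ℝ] E in nhds (ContinuousLinearMap.id ℝ E), 0 < A.det := by
    apply ContinuousLinearMap.continuous_det.continuousAt.eventually (lt_mem_nhds _)
    simp [ContinuousLinearMap.det]
  obtain ⟨δ, hδ, hδ'⟩ := Metric.eventually_nhds_iff.1 hpos
  obtain ⟨ε, hε, hεL, hεC⟩ : ∃ ε : ℝ, 0 < ε ∧ ε * L < 1 ∧ ε * |C| < δ := by
    refine ⟨min 1 δ / (1 + L + |C|), by positivity, ?_, ?_⟩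
    · rw [div_mul_eq_mul_div, div_lt_one (by positivity)]
      have h1 : min 1 δ * (L : ℝ) ≤ 1 * L := by gcongr; exact min_le_left _ _
      have := abs_nonneg C
      linarith
    · rw [div_mul_eq_mul_div, div_lt_iff₀ (by positivity)]
      have h1 : min 1 δ * |C| ≤ δ * |C| := by gcongr; exact min_le_right _ _
      have := mul_nonneg hδ.le L.2
      have : (0:ℝ) ≤ δ * (L : ℝ) := this
      nlinarith
  let D : ℝ → E → ℝ := fun t x => (ContinuousLinearMap.id ℝ E + t • fderiv ℝ G x).det
  have hDcont : ∀ t, Continuous (D t) := fun t =>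
    ContinuousLinearMap.continuous_det.comp (by fun_prop)
  have hDint : ∀ t, IntegrableOn (D t) B μ := fun t =>
    (hDcont t).continuousOn.integrableOn_compact hBc
  have hsmall : ∀ t : ℝ, 0 ≤ t → t ≤ ε → ∫ x in B, D t x ∂μ = ∫ x in B, (1 : ℝ) ∂μ := by
    intro t ht0 htε
    lift t to NNReal using ht0
    have htL : t * L < 1 := by
      have : (t : ℝ) * L ≤ ε * L := by gcongr
      exact_mod_cast this.trans_lt hεL
    obtain ⟨hinj, himg⟩ := retract_aux_surj hg (R := R)
      (fun x hx => Set.indicator_of_notMem (by simpa using hx) _) htL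
    have heq : Set.EqOn (fun x => x + (t : ℝ) • Set.indicator (Metric.closedBall 0 R) G x)
        (fun x => x + (t : ℝ) • G x) B := by
      intro x hx
      simp only [Set.indicator_of_mem (show x ∈ Metric.closedBall 0 R from hx)]
    have hinj' : Set.InjOn (fun x => x + (t : ℝ) • G x) B := (hinj.injOn).congr heq
    have himg' : (fun x => x + (t : ℝ) • G x) '' B = B := by
      rw [← Set.EqOn.image_eq heq]; exact himg
    have hcv := integral_image_eq_integral_abs_det_fderiv_smul μ
      (f := fun x => x + (t : ℝ) • G x)
      (f' := fun x => ContinuousLinearMap.id ℝ E + (t : ℝ) • fderiv ℝ G x)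
      (hBc.measurableSet)
      (fun x _ => ((hasFDerivAt_id x).add
        ((hGc.differentiable one_ne_zero x).hasFDerivAt.const_smul (t : ℝ))).hasFDerivWithinAt)
      hinj' (fun _ => (1 : ℝ))
    rw [himg'] at hcv
    rw [hcv]
    refine setIntegral_congr_fun hBc.measurableSet fun x hx => ?_
    have hp : 0 < D t x := by
      apply hδ'
      rw [dist_eq_norm, add_sub_cancel_left, norm_smul]
      have h1 := hC x hx
      calc ‖(t : ℝ)‖ * ‖fderiv ℝ G x‖ ≤ ε * |C| := by
            gcongr
            · simpa using htε
            · exact h1.trans (le_abs_self C)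
        _ < δ := hεC
    simp only [smul_eq_mul, mul_one]
    exact (abs_of_pos hp).symm
  -- interpolation
  let n := Module.finrank ℝ E
  let s := Finset.range (n + 1)
  let v : ℕ → ℝ := fun i => ε * (i / (n + 1))
  have hv : Set.InjOn v s := by
    intro i _ j _ hij
    have h1 : (i : ℝ) / (n + 1) = j / (n + 1) := mul_left_cancel₀ hε.ne' hij
    have h2 : (i : ℝ) = j := by
      field_simp at h1; exact h1
    exact_mod_cast h2
  have hv01 : ∀ i ∈ s, 0 ≤ v i ∧ v i ≤ ε := by
    intro i hi
    have hi' : (i : ℝ) < n + 1 := by exact_mod_cast Finset.mem_range.1 hi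
    refine ⟨by positivity, mul_le_of_le_one_right hε.le ?_⟩
    rw [div_le_one (by positivity)]; exact hi'.le
  let w : ℕ → ℝ := fun i => (Lagrange.basis s v i).eval 1
  have hinterp : ∀ P : Polynomial ℝ, P.natDegree ≤ n →
      P.eval 1 = ∑ i ∈ s, P.eval (v i) * w i := by
    intro P hP
    have h1 : P.degree < (#s : ℕ) := by
      refine lt_of_le_of_lt Polynomial.degree_le_natDegree ?_
      simp only [s, Finset.card_range]
      exact_mod_cast Nat.lt_succ_of_le hP
    conv_lhs => rw [Lagrange.eq_interpolate hv h1]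
    rw [Lagrange.interpolate_apply, Polynomial.eval_finsetSum]
    simp [w]
  have hD1 : ∀ x, D 1 x = ∑ i ∈ s, D (v i) x * w i := by
    intro x
    obtain ⟨P, hP, hP'⟩ := det_one_add_smul_poly (fderiv ℝ G x)
    have := hinterp P hP
    simpa only [hP'] using this
  have hw : ∑ i ∈ s, w i = 1 := by
    have := hinterp 1 (by simp)
    simpa using this.symm
  have hI1 : ∫ x in B, D 1 x ∂μ = ∫ x in B, (1 : ℝ) ∂μ := by
    simp_rw [hD1]
    rw [integral_finsetSum _ (fun i _ => (hDint (v i)).mul_const _)]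
    have : ∀ i ∈ s, ∫ x in B, D (v i) x * w i ∂μ = (∫ x in B, (1 : ℝ) ∂μ) * w i := by
      intro i hi
      rw [integral_mul_const, hsmall _ (hv01 i hi).1 (hv01 i hi).2]
    rw [Finset.sum_congr rfl this, ← Finset.mul_sum, hw, mul_one]
  have hD10 : ∀ x, D 1 x = 0 := by
    intro x
    have h1 : fderiv ℝ G x = fderiv ℝ r x - ContinuousLinearMap.id ℝ E :=
      ((hr.differentiable one_ne_zero x).hasFDerivAt.sub (hasFDerivAt_id x)).fderiv
    simp only [D, h1, one_smul, add_sub_cancel]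
    exact det_fderiv_eq_zero hr hR hn x
  simp only [hD10] at hI1
  have hvol : 0 < μ.real B := by
    have h1 : 0 < μ B := Metric.measure_closedBall_pos μ 0 hR
    exact ENNReal.toReal_pos h1.ne' hBc.measure_lt_top.ne
  simp at hI1
  linarith

/-- A compactly supported perturbation of the identity of class `C¹` has a zero. -/
theorem exists_zero_smooth [Nontrivial E] {φ : E → E} (hφ : ContDiff ℝ 1 φ) {R : ℝ} (hR : 0 < R)
    (hsupp : ∀ x, R ≤ ‖x‖ → φ x = 0) : ∃ x, x + φ x = 0 := by
  by_contra hcon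
  push Not at hcon
  have hF : ContDiff ℝ 1 (fun x => x + φ x) := contDiff_id.add hφ
  have hn : ∀ x, ‖x + φ x‖ ≠ 0 := fun x => norm_ne_zero_iff.2 (hcon x)
  refine no_retract (r := fun x => (R * ‖x + φ x‖⁻¹) • (x + φ x)) ?_ hR ?_ ?_
  · exact (contDiff_const.mul ((hF.norm ℝ hcon).inv hn)).smul hF
  · intro x
    rw [norm_smul, norm_mul, norm_inv, norm_norm, mul_assoc, inv_mul_cancel₀ (hn x), mul_one,
      Real.norm_eq_abs, abs_of_pos hR]
  · intro x hx
    simp [hsupp x hx.ge, hx, mul_inv_cancel₀ hR.ne']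

/-- Brouwer's theorem for bounded continuous self-maps. -/
theorem brouwer_bounded [Nontrivial E] {f : E → E} (hf : Continuous f) {M : ℝ}
    (hM : ∀ x, ‖f x‖ ≤ M) : ∃ x, f x = x := by
  have hM0 : 0 ≤ M := (norm_nonneg _).trans (hM 0)
  -- cutoff
  let χ : E → ℝ := fun x => max 0 (min 1 (M + 3 - ‖x‖))
  have hχc : Continuous χ := by fun_prop
  let ψ : E → E := fun x => -(χ x • f x)
  have hψc : Continuous ψ := by fun_prop
  have hψ0 : ∀ x, M + 3 ≤ ‖x‖ → ψ x = 0 := by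
    intro x hx
    have : χ x = 0 := max_eq_left ((min_le_right _ _).trans (by linarith))
    simp [ψ, this]
  have hψM : ∀ x, ‖ψ x‖ ≤ M := by
    intro x
    have h0 : 0 ≤ χ x := le_max_left _ _
    have h1 : χ x ≤ 1 := max_le zero_le_one (min_le_left _ _)
    simp only [ψ, norm_neg, norm_smul, Real.norm_eq_abs, abs_of_nonneg h0]
    calc χ x * ‖f x‖ ≤ 1 * M := by gcongr; exact hM x
      _ = M := one_mul M
  have hψf : ∀ x, ‖x‖ ≤ M + 2 → ψ x = - f x := by
    intro x hx
    have : χ x = 1 := by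
      simp only [χ]
      rw [min_eq_left (by linarith), max_eq_right zero_le_one]
    simp [ψ, this]
  have happ : ∀ ε : ℝ, 0 < ε → ε ≤ 1 → ∃ x, ‖x‖ ≤ M + 2 ∧ ‖x - f x‖ ≤ ε := by
    intro ε hε hε1
    obtain ⟨g, hg, hg1, hg2⟩ := hψc.exists_contDiff_approx (ε := fun _ => ε) 1
      continuous_const (fun _ => hε)
    obtain ⟨x, hx⟩ := exists_zero_smooth (φ := g) (by exact_mod_cast hg) (R := M + 3)
      (by linarith) (fun x hx => by
        by_contra h
        exact (hg2 (show x ∈ Function.support g from h)) (hψ0 x hx))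
    have hd := hg1 x
    rw [dist_eq_norm] at hd
    have hgx : g x = -x := by rw [eq_neg_iff_add_eq_zero, add_comm]; exact hx
    have hxn : ‖x‖ ≤ M + 2 := by
      have h1 : ‖x‖ = ‖g x‖ := by rw [hgx, norm_neg]
      have h2 : ‖g x‖ ≤ ‖g x - ψ x‖ + ‖ψ x‖ := by
        simpa using norm_add_le (g x - ψ x) (ψ x)
      have := hψM x
      linarith
    refine ⟨x, hxn, ?_⟩
    rw [hgx, hψf x hxn] at hd
    have : ‖x - f x‖ = ‖-x - -f x‖ := by
      rw [← norm_neg]; congr 1; abel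
    linarith
  have hcomp : IsCompact (Metric.closedBall (0 : E) (M + 2)) := isCompact_closedBall _ _
  obtain ⟨x, hx, hmin⟩ := hcomp.exists_isMinOn ⟨0, by simp; linarith⟩
    (f := fun x => ‖x - f x‖) (by fun_prop)
  refine ⟨x, ?_⟩
  by_contra hne
  have hpos : 0 < ‖x - f x‖ := norm_pos_iff.2 (sub_ne_zero.2 (Ne.symm hne))
  obtain ⟨y, hy, hy'⟩ := happ (min 1 (‖x - f x‖ / 2)) (by positivity) (min_le_left _ _)
  have h1 : ‖x - f x‖ ≤ ‖y - f y‖ := hmin (show y ∈ Metric.closedBall 0 (M + 2) by simpa using hy)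
  have h2 := min_le_right 1 (‖x - f x‖ / 2)
  linarith

end Brouwer

/-- Clamping to `[0, m]`. -/
theorem clamp_variational {m q g : ℝ} (hm : 0 < m) (h : max 0 (min m (q + g)) = q) :
    0 ≤ q ∧ q ≤ m ∧ ∀ x, 0 ≤ x → x ≤ m → g * (x - q) ≤ 0 := by
  have h0 : 0 ≤ q := h ▸ le_max_left _ _
  have h1 : q ≤ m := by rw [← h]; exact max_le hm.le (min_le_left _ _)
  refine ⟨h0, h1, fun x hx0 hxm => ?_⟩
  rcases lt_trichotomy g 0 with hg | hg | hg
  · have : q = 0 := by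
      by_contra hne
      have hq : 0 < q := lt_of_le_of_ne h0 (Ne.symm hne)
      have : max 0 (min m (q + g)) < q := max_lt hq (lt_of_le_of_lt (min_le_right _ _) (by linarith))
      linarith
    subst this
    nlinarith
  · simp [hg]
  · have : q = m := by
      by_contra hne
      have hq : q < m := lt_of_le_of_ne h1 hne
      have : q < max 0 (min m (q + g)) := lt_max_of_lt_right (lt_min hq (by linarith))
      linarith
    subst this
    nlinarith

/-- One-dimensional optimality from the variational inequality. -/
theorem one_dim_opt {W pa a I c q x : ℝ} (hW : 0 < W) (hpa : 0 < pa) (ha : 0 < a) (hI : 0 < I)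
    (hc : 0 ≤ c) (hq : 0 ≤ q) (hx : 0 ≤ x)
    (hv : (W * (a / (I + a * q) * (q + pa) - Real.log (1 + a * q / I)) - c * (q + pa) ^ 2)
      * (x - q) ≤ 0) :
    W * Real.log (1 + a * x / I) / (x + pa) - c * x ≤
      W * Real.log (1 + a * q / I) / (q + pa) - c * q := by
  have hIq : 0 < I + a * q := by positivity
  have hIx : 0 < I + a * x := by positivity
  have htan : Real.log (1 + a * x / I) ≤ Real.log (1 + a * q / I) + a / (I + a * q) * (x - q) := by
    have h1 : 0 < 1 + a * x / I := by positivity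
    have h2 : 0 < 1 + a * q / I := by positivity
    have h3 := Real.log_le_sub_one_of_pos (div_pos h1 h2)
    rw [Real.log_div h1.ne' h2.ne'] at h3
    have h4 : (1 + a * x / I) / (1 + a * q / I) - 1 = a / (I + a * q) * (x - q) := by
      field_simp
      ring
    linarith
  set l := Real.log (1 + a * q / I)
  set d := a / (I + a * q)
  set l' := Real.log (1 + a * x / I)
  have hs : 0 < q + pa := by linarith
  have hy : 0 < x + pa := by linarith
  have h5 : W * l' / (x + pa) ≤ W * (l + d * (x - q)) / (x + pa) := by gcongr
  have h6 : W * (l + d * (x - q)) / (x + pa) - c * x - (W * l / (q + pa) - c * q) =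
      ((W * (d * (q + pa) - l) - c * (q + pa) ^ 2) * (x - q) - c * (q + pa) * (x - q) ^ 2)
        / ((x + pa) * (q + pa)) := by
    field_simp
    ring
  have h7 : ((W * (d * (q + pa) - l) - c * (q + pa) ^ 2) * (x - q) - c * (q + pa) * (x - q) ^ 2)
        / ((x + pa) * (q + pa)) ≤ 0 := by
    apply div_nonpos_of_nonpos_of_nonneg _ (by positivity)
    have : 0 ≤ c * (q + pa) * (x - q) ^ 2 := by positivity
    linarith
  linarith

/-- Existence part of Theorem 3 (with the MBS price restricted to a compact box):
the simultaneous-move Stackelberg game between MBS and FUs has a pure-strategy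
equilibrium with finite prices. -/
theorem stackelberg_pure_equilibrium_exists {K : ℕ} (hK : 1 ≤ K)
    (W pa p0 : ℝ) (hW : 0 < W) (hpa : 0 < pa) (hp0 : 0 ≤ p0)
    (hff : Fin K → Fin K → ℝ) (h0f hf0 N pmax : Fin K → ℝ)
    (hhff : ∀ i j, 0 < hff i j) (hh0f : ∀ i, 0 < h0f i) (hhf0 : ∀ i, 0 < hf0 i)
    (hN : ∀ i, 0 < N i) (hpmax : ∀ i, 0 < pmax i)
    (lambar : ℝ) (hlambar : 0 < lambar) :
    ∃ (lamstar pstar : Fin K → ℝ),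
      (∀ k, lamstar k ∈ Set.Icc (0:ℝ) lambar) ∧
      (∀ k, pstar k ∈ Set.Icc (0:ℝ) (pmax k)) ∧
      (∀ lam : Fin K → ℝ, (∀ k, lam k ∈ Set.Icc (0:ℝ) lambar) →
        revenue hf0 lam pstar ≤ revenue hf0 lamstar pstar) ∧
      (∀ k : Fin K, ∀ x ∈ Set.Icc (0:ℝ) (pmax k),
        payoff W pa p0 hff h0f hf0 N lamstar k (Function.update pstar k x) ≤
          payoff W pa p0 hff h0f hf0 N lamstar k pstar) := by
  classical
  haveI : Nonempty (Fin K) := ⟨⟨0, hK⟩⟩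
  -- interference
  let I : Fin K → (Fin K → ℝ) → ℝ := fun k p =>
    N k + h0f k * p0 + ∑ j ∈ Finset.univ.erase k, hff j k * p j
  have hIpos : ∀ k p, (∀ j, 0 ≤ p j) → 0 < I k p := by
    intro k p hp
    have h1 : 0 ≤ h0f k * p0 := mul_nonneg (hh0f k).le hp0
    have h2 : 0 ≤ ∑ j ∈ Finset.univ.erase k, hff j k * p j :=
      Finset.sum_nonneg fun j _ => mul_nonneg (hhff j k).le (hp j)
    have h3 := hN k
    simp only [I]; linarith
  have hIc : ∀ k, Continuous (I k) := fun k => by fun_prop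
  -- sign function of the marginal payoff
  let G : Fin K → (Fin K → ℝ) → ℝ := fun k p =>
    W * (hff k k / (I k p + hff k k * p k) * (p k + pa) - Real.log (1 + hff k k * p k / I k p))
      - lambar * hf0 k * (p k + pa) ^ 2
  let Q : EuclideanSpace ℝ (Fin K) → (Fin K → ℝ) := fun x k => max 0 (min (pmax k) (x k))
  have hQ0 : ∀ x k, 0 ≤ Q x k := fun x k => le_max_left _ _
  have hQc : Continuous Q := by fun_prop
  have hGc : ∀ k, Continuous (fun x => G k (Q x)) := by
    intro k
    have hi : Continuous (fun x => I k (Q x)) := (hIc k).comp hQc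
    have hq : Continuous (fun x => Q x k) := (continuous_apply k).comp hQc
    have e1 : ∀ x, I k (Q x) ≠ 0 := fun x => (hIpos k _ (hQ0 x)).ne'
    have e2 : ∀ x, I k (Q x) + hff k k * Q x k ≠ 0 := fun x =>
      (add_pos_of_pos_of_nonneg (hIpos k _ (hQ0 x)) (mul_nonneg (hhff k k).le (hQ0 x k))).ne'
    have e3 : ∀ x, 1 + hff k k * Q x k / I k (Q x) ≠ 0 := fun x =>
      (add_pos_of_pos_of_nonneg one_pos (div_nonneg (mul_nonneg (hhff k k).le (hQ0 x k))
        (hIpos k _ (hQ0 x)).le)).ne'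
    have c1 : Continuous (fun x => hff k k / (I k (Q x) + hff k k * Q x k)) :=
      continuous_const.div (hi.add (continuous_const.mul hq)) e2
    have c2 : Continuous (fun x => Real.log (1 + hff k k * Q x k / I k (Q x))) :=
      (continuous_const.add ((continuous_const.mul hq).div hi e1)).log e3
    exact (continuous_const.mul ((c1.mul (hq.add continuous_const)).sub c2)).sub
      (continuous_const.mul ((hq.add continuous_const).pow 2))
  let f : EuclideanSpace ℝ (Fin K) → EuclideanSpace ℝ (Fin K) := fun x => WithLp.toLp 2 fun k => max 0 (min (pmax k) (Q x k + G k (Q x)))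
  have hfc : Continuous f := by
    refine (PiLp.continuous_toLp 2 _).comp (continuous_pi fun k => ?_)
    have hq : Continuous (fun x => Q x k) := (continuous_apply k).comp hQc
    exact continuous_const.max (continuous_const.min (hq.add (hGc k)))
  have hfb : ∀ x, ‖f x‖ ≤ Real.sqrt (∑ k, pmax k ^ 2) := by
    intro x
    rw [EuclideanSpace.norm_eq]
    apply Real.sqrt_le_sqrt
    apply Finset.sum_le_sum
    intro k _
    have h0 : 0 ≤ f x k := le_max_left _ _
    have h1 : f x k ≤ pmax k := max_le (hpmax k).le (min_le_left _ _)
    rw [Real.norm_eq_abs, abs_of_nonneg h0]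
    gcongr
  obtain ⟨x, hx⟩ := brouwer_bounded hfc hfb
  have hxk : ∀ k, max 0 (min (pmax k) (Q x k + G k (Q x))) = x k := fun k =>
    congrArg (fun y : EuclideanSpace ℝ (Fin K) => y k) hx
  have hQx : ∀ k, Q x k = x k := by
    intro k
    have h0 : 0 ≤ x k := hxk k ▸ le_max_left _ _
    have h1 : x k ≤ pmax k := by rw [← hxk k]; exact max_le (hpmax k).le (min_le_left _ _)
    simp only [Q]
    rw [min_eq_right h1, max_eq_right h0]
  have hvar := fun k => clamp_variational (hpmax k) ((hxk k).trans (hQx k).symm)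
  set p : Fin K → ℝ := Q x
  refine ⟨fun _ => lambar, p, fun _ => ⟨hlambar.le, le_rfl⟩,
    fun k => ⟨(hvar k).1, (hvar k).2.1⟩, ?_, ?_⟩
  · intro lam hlam
    unfold revenue
    apply Finset.sum_le_sum
    intro k _
    have h1 := (hlam k).2
    have h2 := (hhf0 k).le
    have h3 := (hvar k).1
    gcongr
  · intro k y hy
    have h1 := one_dim_opt (c := lambar * hf0 k) hW hpa (hhff k k) (hIpos k p (hQ0 x))
      (mul_nonneg hlambar.le (hhf0 k).le) (hvar k).1 hy.1 ((hvar k).2.2 y hy.1 hy.2)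
    have h2 : ∑ j ∈ Finset.univ.erase k, hff j k * Function.update p k y j =
        ∑ j ∈ Finset.univ.erase k, hff j k * p j := by
      refine Finset.sum_congr rfl fun j hj => ?_
      rw [Function.update_of_ne (Finset.ne_of_mem_erase hj)]
    simp only [payoff, sinr, h2, Function.update_self]
    exact h1
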